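/- Let A = Σ_{s≥0} P_s(ℰ) D^s be an operator on polynomials in (x,ξ) on ℝⁿ, where each P_s is a polynomial in one variable, ℰ = ξⱼ∂/∂ξⱼ, and D = ∂²/∂xʲ∂ξⱼ. Then for the lifted inversion generator L_{X_i} one has [L_{X_i}, A] = Σ_{s≥1} s P_s(ℰ)(2ℰ + n + s) D^{s−1} ∘ ∂/∂ξᵢ, and this vanishes for all i if and only if P_s = 0 for all s ≥ 1 (when restricted to polynomials of arbitrarily large degree in ξ). Consequently any such A commuting with all inversions equals P₀(ℰ). -/

import Mathlib

open MvPolynomial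

/-- The fiberwise Euler operator `ℰ = Σⱼ ξⱼ ∂/∂ξⱼ` as a linear endomorphism of
`ℂ[x¹,…,xⁿ,ξ₁,…,ξₙ]` (`x` variables indexed by `Sum.inl`, `ξ` by `Sum.inr`). -/
noncomputable def endE (n : ℕ) : Module.End ℂ (MvPolynomial (Fin n ⊕ Fin n) ℂ) :=
  ∑ j : Fin n,
    (LinearMap.mulLeft ℂ (X (Sum.inr j))).comp (pderiv (Sum.inr j)).toLinearMap

/-- The divergence operator `D = Σⱼ ∂²/∂xʲ∂ξⱼ` as a linear endomorphism. -/
noncomputable def endD (n : ℕ) : Module.End ℂ (MvPolynomial (Fin n ⊕ Fin n) ℂ) :=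
  ∑ j : Fin n,
    ((pderiv (Sum.inl j)).toLinearMap).comp (pderiv (Sum.inr j)).toLinearMap

/-- The partial derivative `∂/∂ξᵢ` as a linear endomorphism. -/
noncomputable def endXi (n : ℕ) (i : Fin n) :
    Module.End ℂ (MvPolynomial (Fin n ⊕ Fin n) ℂ) :=
  (pderiv (Sum.inr i)).toLinearMap

/-- The canonical lift `L_{X_i}` of the inversion generator `X_i = xⁱxʲ∂/∂xʲ`,
`L_{X_i} F = Σⱼ xⁱxʲ ∂F/∂xʲ − (Σⱼ ξⱼxʲ) ∂F/∂ξᵢ − xⁱ Σⱼ ξⱼ ∂F/∂ξⱼ`,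
as a linear endomorphism. -/
noncomputable def endL (n : ℕ) (i : Fin n) :
    Module.End ℂ (MvPolynomial (Fin n ⊕ Fin n) ℂ) :=
  (∑ j : Fin n,
      (LinearMap.mulLeft ℂ (X (Sum.inl i) * X (Sum.inl j))).comp
        (pderiv (Sum.inl j)).toLinearMap)
    - (LinearMap.mulLeft ℂ (∑ j : Fin n, X (Sum.inr j) * X (Sum.inl j))).comp
        (pderiv (Sum.inr i)).toLinearMap
    - (LinearMap.mulLeft ℂ (X (Sum.inl i))).comp
        (∑ j : Fin n,
          (LinearMap.mulLeft ℂ (X (Sum.inr j))).comp (pderiv (Sum.inr j)).toLinearMap)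

/-!
The commutator `[L_{X_i}, D] = (2ℰ + n + 1) ∘ ∂/∂ξᵢ`, together with `[ℰ, D] = -D` and the fact that
`D` commutes with `∂/∂ξᵢ`, yields `[L_{X_i}, D^s] = s (2ℰ + n + s) D^(s-1) ∘ ∂/∂ξᵢ` by induction on
`s`. As `L_{X_i}` commutes with `ℰ`, the formula for `[L_{X_i}, A]` follows by linearity.

If that commutator vanishes, evaluate it on the monomials `(xⁱ)^s ξᵢ^b`. `D^t` kills them for
`t > s`, and the terms with `t < s` are zero by induction, so the `s`-th coefficient polynomial in
`ℰ` vanishes at every natural number, hence identically.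
-/

section WeylType

variable {R A : Type*} [CommRing R] [Ring A] [Algebra R A]

lemma commute_aeval_of_commute {a b : A} (h : Commute a b) (p : Polynomial R) :
    Commute a (Polynomial.aeval b p) :=
  Algebra.commute_of_mem_adjoin_singleton_of_commute (Polynomial.aeval_mem_adjoin_singleton R b) h

variable {L D E Y : A} {c : R}

lemma mul_pow_sub_pow_mul_of_mul_sub_mul_eq
    (hLD : L * D - D * L = (2 • E + (c + 1) • 1) * Y) (hDE : D * E = (E + 1) * D)
    (hYD : Commute Y D) (s : ℕ) :
    L * D ^ s - D ^ s * L = (s : R) • ((2 • E + (c + s) • 1) * D ^ (s - 1) * Y) := by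
  induction s with
  | zero => simp
  | succ s ih =>
    have hD : D * (L * D ^ s - D ^ s * L) =
        (s : R) • ((2 • E + (c + s + 2) • 1) * D ^ s * Y) := by
      rcases s with _ | s
      · simp
      · have hmove : D * (2 • E + (c + (s + 1 : ℕ)) • 1) =
            (2 • E + (c + (s + 1 : ℕ) + 2) • 1) * D := by
          rw [mul_add, mul_smul_comm, hDE]
          simp only [add_mul, smul_mul_assoc, mul_smul_comm, one_mul, mul_one]
          module
        rw [ih, mul_smul_comm, ← mul_assoc, ← mul_assoc, hmove, mul_assoc _ D, ← pow_succ',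
          Nat.add_sub_cancel]
    calc L * D ^ (s + 1) - D ^ (s + 1) * L
        = (L * D - D * L) * D ^ s + D * (L * D ^ s - D ^ s * L) := by
          rw [pow_succ']; noncomm_ring
      _ = (2 • E + (c + 1) • 1) * (D ^ s * Y) +
            (s : R) • ((2 • E + (c + s + 2) • 1) * (D ^ s * Y)) := by
          rw [hD, hLD, mul_assoc, (hYD.pow_right s).eq, mul_assoc]
      _ = _ := by
          rw [Nat.add_sub_cancel, mul_assoc]
          simp only [add_mul, smul_mul_assoc, one_mul]
          push_cast
          module

lemma mul_sum_aeval_mul_pow_sub_sum_mul_of_mul_sub_mul_eq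
    (hLD : L * D - D * L = (2 • E + (c + 1) • 1) * Y) (hDE : D * E = (E + 1) * D)
    (hYD : Commute Y D) (hLE : Commute L E) (P : ℕ → Polynomial R) (S : Finset ℕ) :
    L * (∑ s ∈ S, Polynomial.aeval E (P s) * D ^ s) -
        (∑ s ∈ S, Polynomial.aeval E (P s) * D ^ s) * L =
      ∑ s ∈ S, (s : R) •
        (Polynomial.aeval E (P s) * (2 • E + (c + s) • 1) * D ^ (s - 1) * Y) := by
  rw [Finset.mul_sum, Finset.sum_mul, ← Finset.sum_sub_distrib]
  refine Finset.sum_congr rfl fun s _ => ?_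
  rw [← mul_assoc, (commute_aeval_of_commute hLE (P s)).eq, mul_assoc, mul_assoc, ← mul_sub,
    mul_pow_sub_pow_mul_of_mul_sub_mul_eq hLD hDE hYD, mul_smul_comm]
  simp only [mul_assoc]

end WeylType

section Derivations

variable {R σ : Type*} [CommRing R]

lemma sum_derivation_apply {ι A : Type*} [CommRing A] [Algebra R A] (s : Finset ι)
    (d : ι → Derivation R A A) (a : A) : (∑ j ∈ s, d j) a = ∑ j ∈ s, d j a := by
  rw [← Derivation.coeFnAddMonoidHom_apply, map_sum, Finset.sum_apply]
  rfl

lemma derivation_comm_apply_of_X {d₁ d₂ d₃ : Derivation R (MvPolynomial σ R) (MvPolynomial σ R)}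
    (h : ∀ i, d₁ (d₂ (X i)) = d₂ (d₁ (X i)) + d₃ (X i)) (F : MvPolynomial σ R) :
    d₁ (d₂ F) = d₂ (d₁ F) + d₃ F := by
  have hlie : ⁅d₁, d₂⁆ = d₃ := derivation_ext fun i => by
    rw [Derivation.commutator_apply, h, add_sub_cancel_left]
  rw [← hlie, Derivation.commutator_apply, add_sub_cancel]

lemma pderiv_pderiv_comm (a b : σ) (F : MvPolynomial σ R) :
    pderiv a (pderiv b F) = pderiv b (pderiv a F) := by
  classical
  simpa using derivation_comm_apply_of_X (d₁ := pderiv a) (d₂ := pderiv b) (d₃ := 0)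
    (fun c => by simp [Pi.single_apply, apply_ite]) F

lemma pderiv_inr_rename_inl {τ : Type*} (j : τ) (p : MvPolynomial σ R) :
    pderiv (Sum.inr j) (rename Sum.inl p : MvPolynomial (σ ⊕ τ) R) = 0 := by
  classical
  refine pderiv_eq_zero_of_notMem_vars fun h => ?_
  simpa using vars_rename _ _ h

lemma pderiv_X_pow_mul_X_pow {i j : σ} (hij : i ≠ j) (a b : ℕ) :
    pderiv j (X i ^ a * X j ^ b : MvPolynomial σ R) = (b : R) • (X i ^ a * X j ^ (b - 1)) := by
  simp only [Derivation.leibniz, Derivation.leibniz_pow, pderiv_X_self, pderiv_X_of_ne hij,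
    smul_eq_mul, nsmul_eq_mul, mul_one, mul_zero, add_zero, smul_eq_C_mul, map_natCast]
  ring

lemma pderiv_X_mul_X [DecidableEq σ] (i j k : σ) :
    pderiv k (X i * X j : MvPolynomial σ R) =
      (if i = k then (1 : R) else 0) • X j + (if j = k then (1 : R) else 0) • X i := by
  simp [pderiv_X, Pi.single_apply, add_comm]

end Derivations

section PhaseSpace

variable (R σ : Type*) [CommRing R] [Fintype σ]

local notation "𝒫" => MvPolynomial (σ ⊕ σ) R

/-- The fiberwise Euler derivation `ℰ = Σⱼ ξⱼ ∂/∂ξⱼ`, with `x` indexed by `Sum.inl` and `ξ` by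
`Sum.inr`. -/
noncomputable def fiberEuler : Derivation R 𝒫 𝒫 :=
  ∑ j, (X (Sum.inr j) : 𝒫) • pderiv (Sum.inr j)

/-- The divergence operator `D = Σⱼ ∂²/∂xʲ∂ξⱼ`. -/
noncomputable def divergence : Module.End R 𝒫 :=
  ∑ j, (pderiv (Sum.inl j)).toLinearMap * (pderiv (Sum.inr j)).toLinearMap

variable {R σ}

/-- The canonical lift `L_X = Xʲ ∂/∂xʲ − ξₖ (∂Xᵏ/∂xʲ) ∂/∂ξⱼ` of the polynomial vector field
`Xʲ ∂/∂xʲ`. -/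
noncomputable def canonicalLift (V : σ → MvPolynomial σ R) : Derivation R 𝒫 𝒫 :=
  ∑ j, (rename Sum.inl (V j) : 𝒫) • pderiv (Sum.inl j) -
    ∑ j, (∑ k, X (Sum.inr k) * rename Sum.inl (pderiv j (V k)) : 𝒫) •
      pderiv (Sum.inr j)

variable (R) in
/-- The canonical lift `L_{X_i}` of the generator `X_i = xⁱxʲ ∂/∂xʲ` of inversions. -/
noncomputable def inversionLift (i : σ) : Module.End R 𝒫 :=
  (canonicalLift fun j => X i * X j).toLinearMap

local notation "ℰ" => (Derivation.toLinearMap (fiberEuler R σ) : Module.End R 𝒫)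

local notation "∂ξ" j:max => (Derivation.toLinearMap (pderiv (Sum.inr j)) : Module.End R 𝒫)

lemma fiberEuler_apply (F : 𝒫) :
    fiberEuler R σ F = ∑ j, X (Sum.inr j) * pderiv (Sum.inr j) F := by
  simp [fiberEuler, sum_derivation_apply]

lemma divergence_apply (F : 𝒫) :
    divergence R σ F = ∑ j, pderiv (Sum.inl j) (pderiv (Sum.inr j) F) := by
  simp [divergence]

lemma canonicalLift_apply (V : σ → MvPolynomial σ R) (F : 𝒫) :
    canonicalLift V F = ∑ j, rename Sum.inl (V j) * pderiv (Sum.inl j) F -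
      ∑ j, (∑ k, X (Sum.inr k) * rename Sum.inl (pderiv j (V k))) * pderiv (Sum.inr j) F := by
  simp [canonicalLift, sum_derivation_apply]

lemma fiberEuler_X_inl (j : σ) : fiberEuler R σ (X (Sum.inl j)) = 0 := by
  simp [fiberEuler_apply]

lemma fiberEuler_X_inr (j : σ) : fiberEuler R σ (X (Sum.inr j)) = X (Sum.inr j) := by
  classical simp [fiberEuler_apply, Pi.single_apply]

lemma canonicalLift_X_inl (V : σ → MvPolynomial σ R) (j : σ) :
    canonicalLift V (X (Sum.inl j)) = rename Sum.inl (V j) := by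
  classical simp [canonicalLift_apply, Pi.single_apply]

lemma canonicalLift_X_inr (V : σ → MvPolynomial σ R) (j : σ) :
    canonicalLift V (X (Sum.inr j)) =
      -∑ k, X (Sum.inr k) * rename Sum.inl (pderiv j (V k)) := by
  classical simp [canonicalLift_apply, Pi.single_apply]

lemma fiberEuler_rename_inl (p : MvPolynomial σ R) : fiberEuler R σ (rename Sum.inl p) = 0 := by
  simp [fiberEuler_apply, pderiv_inr_rename_inl]

lemma pderiv_inl_fiberEuler (j : σ) (F : 𝒫) :
    pderiv (Sum.inl j) (fiberEuler R σ F) = fiberEuler R σ (pderiv (Sum.inl j) F) := by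
  classical
  simpa using derivation_comm_apply_of_X (d₃ := 0) (fun c => by
    rcases c with c | c <;>
      simp [fiberEuler_X_inl, fiberEuler_X_inr, Pi.single_apply, apply_ite]) F

lemma pderiv_inr_fiberEuler (j : σ) (F : 𝒫) :
    pderiv (Sum.inr j) (fiberEuler R σ F) =
      fiberEuler R σ (pderiv (Sum.inr j) F) + pderiv (Sum.inr j) F := by
  classical
  refine derivation_comm_apply_of_X (fun c => ?_) F
  rcases c with c | c
  · simp [fiberEuler_X_inl]
  · by_cases h : c = j <;> simp [fiberEuler_X_inr, h]

lemma canonicalLift_fiberEuler (V : σ → MvPolynomial σ R) (F : 𝒫) :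
    canonicalLift V (fiberEuler R σ F) = fiberEuler R σ (canonicalLift V F) := by
  simpa using derivation_comm_apply_of_X (d₃ := 0) (fun c => by
    rcases c with c | c <;>
      simp [fiberEuler_X_inl, fiberEuler_X_inr, canonicalLift_X_inl, canonicalLift_X_inr,
        fiberEuler_rename_inl, mul_comm]) F

lemma pderiv_inr_canonicalLift (V : σ → MvPolynomial σ R) (j : σ) (F : 𝒫) :
    pderiv (Sum.inr j) (canonicalLift V F) = canonicalLift V (pderiv (Sum.inr j) F) -
      ∑ k, rename Sum.inl (pderiv k (V j)) * pderiv (Sum.inr k) F := by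
  classical
  have h := derivation_comm_apply_of_X (d₁ := pderiv (Sum.inr j)) (d₂ := canonicalLift V)
    (d₃ := -∑ k, (rename Sum.inl (pderiv k (V j)) : 𝒫) • pderiv (Sum.inr k))
    (fun c => by
      rcases c with c | c <;>
        simp [sum_derivation_apply, canonicalLift_X_inl, canonicalLift_X_inr,
          pderiv_inr_rename_inl, Pi.single_apply, apply_ite]) F
  simpa [sum_derivation_apply, sub_eq_add_neg] using h

lemma pderiv_inl_canonicalLift (V : σ → MvPolynomial σ R) (j : σ) (F : 𝒫) :
    pderiv (Sum.inl j) (canonicalLift V F) = canonicalLift V (pderiv (Sum.inl j) F) +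
      (∑ k, rename Sum.inl (pderiv j (V k)) * pderiv (Sum.inl k) F -
        ∑ k, (∑ l, X (Sum.inr l) * rename Sum.inl (pderiv j (pderiv k (V l)))) *
          pderiv (Sum.inr k) F) := by
  classical
  have h := derivation_comm_apply_of_X (d₁ := pderiv (Sum.inl j)) (d₂ := canonicalLift V)
    (d₃ := ∑ k, (rename Sum.inl (pderiv j (V k)) : 𝒫) • pderiv (Sum.inl k) -
      ∑ k, (∑ l, X (Sum.inr l) * rename Sum.inl (pderiv j (pderiv k (V l))) : 𝒫) •
        pderiv (Sum.inr k))
    (fun c => by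
      rcases c with c | c <;>
        simp [sum_derivation_apply, canonicalLift_X_inl, canonicalLift_X_inr,
          pderiv_rename Sum.inl_injective, Pi.single_apply, apply_ite]) F
  simpa [sum_derivation_apply] using h

lemma divergence_mul_fiberEuler : divergence R σ * ℰ = (ℰ + 1) * divergence R σ := by
  refine LinearMap.ext fun F => ?_
  simp [divergence_apply, pderiv_inl_fiberEuler, pderiv_inr_fiberEuler, Finset.sum_add_distrib]

lemma canonicalLift_divergence (V : σ → MvPolynomial σ R) (F : 𝒫) :
    canonicalLift V (divergence R σ F) = divergence R σ (canonicalLift V F) +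
      (∑ j, rename Sum.inl (pderiv j (∑ k, pderiv k (V k))) * pderiv (Sum.inr j) F +
        ∑ j, ∑ k, (∑ l, X (Sum.inr l) * rename Sum.inl (pderiv j (pderiv k (V l)))) *
          pderiv (Sum.inr k) (pderiv (Sum.inr j) F)) := by
  have hmixed : ∑ j, ∑ k, rename Sum.inl (pderiv j (V k)) *
        pderiv (Sum.inl k) (pderiv (Sum.inr j) F) =
      ∑ j, ∑ k, rename Sum.inl (pderiv k (V j)) *
        pderiv (Sum.inl j) (pderiv (Sum.inr k) F) := Finset.sum_comm
  have hdiv : ∑ j, rename Sum.inl (pderiv j (∑ k, pderiv k (V k))) * pderiv (Sum.inr j) F =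
      ∑ j, ∑ k, rename Sum.inl (pderiv j (pderiv k (V j))) * pderiv (Sum.inr k) F := by
    rw [Finset.sum_comm]
    refine Finset.sum_congr rfl fun k _ => ?_
    simp only [map_sum, Finset.sum_mul, pderiv_pderiv_comm k]
  rw [hdiv]
  simp only [divergence_apply, pderiv_inr_canonicalLift, pderiv_inl_canonicalLift, map_sub,
    map_sum, pderiv_mul, pderiv_rename Sum.inl_injective, Finset.sum_add_distrib,
    Finset.sum_sub_distrib, hmixed]
  ring

lemma sum_pderiv_X_mul_X (i : σ) :
    ∑ k, pderiv k (X i * X k : MvPolynomial σ R) = (Fintype.card σ + 1 : R) • X i := by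
  classical
  simp only [pderiv_X_mul_X]
  simp [Finset.sum_add_distrib, add_smul, add_comm, Nat.cast_smul_eq_nsmul]

lemma sum_X_inr_mul_rename_pderiv_pderiv_X_mul_X [DecidableEq σ] (i j k : σ) :
    ∑ l, (X (Sum.inr l) : 𝒫) *
        rename Sum.inl (pderiv j (pderiv k (X i * X l : MvPolynomial σ R))) =
      (if i = k then X (Sum.inr j) else 0) + if i = j then X (Sum.inr k) else 0 := by
  simp only [pderiv_X_mul_X, map_add, Derivation.map_smul, pderiv_X, Pi.single_apply, mul_add,
    Finset.sum_add_distrib]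
  congr 1
  · by_cases h : i = k <;> simp [h, apply_ite (rename Sum.inl)]
  · by_cases h : i = j <;> simp [h]

lemma commute_inversionLift_fiberEuler (i : σ) : Commute (inversionLift R i) ℰ :=
  LinearMap.ext (canonicalLift_fiberEuler _)

lemma commute_pderiv_inr_divergence (j : σ) : Commute (∂ξ j) (divergence R σ) := by
  refine LinearMap.ext fun F => ?_
  simp [divergence_apply, pderiv_pderiv_comm (Sum.inr j)]

lemma inversionLift_mul_divergence_sub (i : σ) :
    inversionLift R i * divergence R σ - divergence R σ * inversionLift R i =
      (2 • ℰ + ((Fintype.card σ : R) + 1) • 1) * ∂ξ i := by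
  classical
  refine LinearMap.ext fun F => ?_
  rw [LinearMap.sub_apply, sub_eq_iff_eq_add']
  refine (canonicalLift_divergence _ F).trans (congrArg _ ?_)
  simp only [sum_pderiv_X_mul_X, sum_X_inr_mul_rename_pderiv_pderiv_X_mul_X,
    Derivation.map_smul, pderiv_X, Pi.single_apply, map_smul, add_mul, ite_mul, zero_mul,
    Finset.sum_add_distrib]
  simp [fiberEuler_apply, pderiv_pderiv_comm (Sum.inr i), two_mul, add_comm]

lemma fiberEuler_X_pow_mul_X_pow (i : σ) (a b : ℕ) :
    fiberEuler R σ (X (Sum.inl i) ^ a * X (Sum.inr i) ^ b) =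
      (b : R) • (X (Sum.inl i) ^ a * X (Sum.inr i) ^ b) := by
  rcases b with _ | b
  · simp [Derivation.leibniz_pow, fiberEuler_X_inl]
  · simp only [Derivation.leibniz, Derivation.leibniz_pow, fiberEuler_X_inl, fiberEuler_X_inr,
      Nat.add_sub_cancel, smul_eq_mul, nsmul_eq_mul, mul_zero, add_zero, smul_eq_C_mul, map_natCast]
    ring

lemma divergence_X_pow_mul_X_pow (i : σ) (a b : ℕ) :
    divergence R σ (X (Sum.inl i) ^ a * X (Sum.inr i) ^ b) =
      ((a : R) * b) • (X (Sum.inl i) ^ (a - 1) * X (Sum.inr i) ^ (b - 1)) := by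
  rw [divergence_apply, Finset.sum_eq_single_of_mem i (Finset.mem_univ i)]
  · rw [pderiv_X_pow_mul_X_pow Sum.inl_ne_inr, Derivation.map_smul, mul_comm (X _ ^ a),
      pderiv_X_pow_mul_X_pow Sum.inr_ne_inl, smul_smul, mul_comm (b : R), mul_comm (X _ ^ (b - 1))]
  · intro j _ hj
    simp [hj.symm]

lemma divergence_pow_X_pow_mul_X_pow (i : σ) (a b t : ℕ) :
    (divergence R σ ^ t) (X (Sum.inl i) ^ a * X (Sum.inr i) ^ b) =
      ((a.descFactorial t * b.descFactorial t : ℕ) : R) •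
        (X (Sum.inl i) ^ (a - t) * X (Sum.inr i) ^ (b - t)) := by
  induction t with
  | zero => simp
  | succ t ih =>
    rw [pow_succ', Module.End.mul_apply, ih, map_smul, divergence_X_pow_mul_X_pow, smul_smul,
      Nat.sub_sub, Nat.sub_sub, Nat.descFactorial_succ, Nat.descFactorial_succ]
    push_cast
    ring_nf

lemma aeval_fiberEuler_X_pow_mul_X_pow (p : Polynomial R) (i : σ) (a b : ℕ) :
    Polynomial.aeval ℰ p (X (Sum.inl i) ^ a * X (Sum.inr i) ^ b) =
      p.eval (b : R) • (X (Sum.inl i) ^ a * X (Sum.inr i) ^ b) :=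
  Module.End.aeval_apply_of_mem_apply_eq_smul (fiberEuler_X_pow_mul_X_pow i a b)

lemma eq_zero_of_sum_aeval_mul_divergence_pow_apply_eq_zero [IsDomain R] [CharZero R] (i : σ)
    (Q : ℕ → Polynomial R) (N : ℕ)
    (h : ∀ a b, (∑ s ∈ Finset.range N, Polynomial.aeval ℰ (Q s) * divergence R σ ^ s)
      (X (Sum.inl i) ^ a * X (Sum.inr i) ^ b) = 0) {s : ℕ} (hs : s < N) : Q s = 0 := by
  induction s using Nat.strong_induction_on with
  | _ s ih =>
  have hterm (t : ℕ) (ht : t ≠ s) (m : ℕ) (htN : t < N) :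
      (Polynomial.aeval ℰ (Q t) * divergence R σ ^ t)
        (X (Sum.inl i) ^ s * X (Sum.inr i) ^ (m + s)) = 0 := by
    rcases ht.lt_or_gt with hlt | hgt
    · simp [ih t hlt htN]
    · simp [divergence_pow_X_pow_mul_X_pow, Nat.descFactorial_of_lt hgt]
  have hroot (m : ℕ) : (Q s).eval (m : R) = 0 := by
    have hm := h s (m + s)
    rw [LinearMap.sum_apply, Finset.sum_eq_single_of_mem s (Finset.mem_range.2 hs)
      fun t ht hts => hterm t hts m (Finset.mem_range.1 ht), Module.End.mul_apply,
      divergence_pow_X_pow_mul_X_pow, map_smul, aeval_fiberEuler_X_pow_mul_X_pow,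
      Nat.add_sub_cancel] at hm
    simpa [X_ne_zero, Nat.descFactorial_eq_zero_iff_lt] using hm
  refine Polynomial.eq_zero_of_infinite_isRoot _
    ((Set.infinite_range_of_injective (Nat.cast_injective (R := R))).mono ?_)
  rintro _ ⟨m, rfl⟩
  exact hroot m

lemma inversionLift_mul_sum_aeval_mul_divergence_pow_sub (i : σ) (P : ℕ → Polynomial R)
    (S : Finset ℕ) :
    inversionLift R i * (∑ s ∈ S, Polynomial.aeval ℰ (P s) * divergence R σ ^ s) -
        (∑ s ∈ S, Polynomial.aeval ℰ (P s) * divergence R σ ^ s) * inversionLift R i =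
      ∑ s ∈ S, (s : R) • (Polynomial.aeval ℰ (P s) * (2 • ℰ + ((Fintype.card σ : R) + s) • 1) *
        divergence R σ ^ (s - 1) * ∂ξ i) :=
  mul_sum_aeval_mul_pow_sub_sum_mul_of_mul_sub_mul_eq
    (c := (Fintype.card σ : R)) (inversionLift_mul_divergence_sub i)
    divergence_mul_fiberEuler (commute_pderiv_inr_divergence i)
    (commute_inversionLift_fiberEuler i) P S

lemma eq_zero_of_commute_inversionLift [IsDomain R] [CharZero R] {i : σ} {P : ℕ → Polynomial R}
    {N : ℕ} (h : Commute (inversionLift R i)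
      (∑ s ∈ Finset.range (N + 1), Polynomial.aeval ℰ (P s) * divergence R σ ^ s))
    {s : ℕ} (hs : s < N) : P (s + 1) = 0 := by
  let w (s : ℕ) : Polynomial R :=
    2 • Polynomial.X + ((Fintype.card σ : R) + (s + 1 : ℕ)) • 1
  let Q (s : ℕ) : Polynomial R := ((s + 1 : ℕ) : R) • (P (s + 1) * w s)
  have hQξ : (∑ s ∈ Finset.range N, Polynomial.aeval ℰ (Q s) * divergence R σ ^ s) *
      ∂ξ i = 0 := by
    have hcomm := inversionLift_mul_sum_aeval_mul_divergence_pow_sub i P (Finset.range (N + 1))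
    rw [h.eq, sub_self, Finset.sum_range_succ', Nat.cast_zero, zero_smul, add_zero] at hcomm
    simp only [Q, w, Finset.sum_mul, map_smul, map_nsmul, map_mul, map_add, map_one,
      Polynomial.aeval_X, smul_mul_assoc]
    exact hcomm.symm
  have hQ : Q s = 0 := by
    refine eq_zero_of_sum_aeval_mul_divergence_pow_apply_eq_zero i Q N (fun a b => ?_) hs
    have hab := LinearMap.congr_fun hQξ (X (Sum.inl i) ^ a * X (Sum.inr i) ^ (b + 1))
    rw [Module.End.mul_apply, Derivation.coeFn_coe,
      pderiv_X_pow_mul_X_pow Sum.inl_ne_inr, map_smul, Nat.add_sub_cancel] at hab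
    exact (smul_eq_zero.1 hab).resolve_left (Nat.cast_ne_zero.2 b.succ_ne_zero)
  have hw : w s ≠ 0 := fun hw => by
    have h0 : ((Fintype.card σ + (s + 1) : ℕ) : R) = 0 := by
      simpa [w] using congrArg (Polynomial.eval 0) hw
    exact absurd (Nat.cast_eq_zero.1 h0) (by omega)
  have hPw : P (s + 1) * w s = 0 :=
    (smul_eq_zero.1 hQ).resolve_left (Nat.cast_ne_zero.2 s.succ_ne_zero)
  exact (mul_eq_zero.1 hPw).resolve_right hw

theorem affine_invariant_op_commuting_with_inversions_general [IsDomain R] [CharZero R]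
    [Nonempty σ] (P : ℕ → Polynomial R) (N : ℕ) (hP : ∀ s, N < s → P s = 0)
    (A : Module.End R 𝒫)
    (hA : A = ∑ s ∈ Finset.range (N + 1), Polynomial.aeval ℰ (P s) * divergence R σ ^ s) :
    (∀ i : σ, inversionLift R i * A - A * inversionLift R i =
        ∑ s ∈ Finset.range (N + 1), (s : R) •
          (Polynomial.aeval ℰ (P s) * (2 • ℰ + ((Fintype.card σ : R) + s) • 1) *
            divergence R σ ^ (s - 1) * ∂ξ i)) ∧
    ((∀ i : σ, inversionLift R i * A = A * inversionLift R i) ↔ ∀ s, 1 ≤ s → P s = 0) ∧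
    ((∀ i : σ, inversionLift R i * A = A * inversionLift R i) → A = Polynomial.aeval ℰ (P 0)) := by
  have hA₀ (h : ∀ s, 1 ≤ s → P s = 0) : A = Polynomial.aeval ℰ (P 0) := by
    rw [hA, Finset.sum_range_succ', Finset.sum_eq_zero fun s _ => by simp [h (s + 1)]]
    simp
  have hzero (h : ∀ i : σ, inversionLift R i * A = A * inversionLift R i) (s : ℕ) (hs : 1 ≤ s) :
      P s = 0 := by
    obtain ⟨s, rfl⟩ := Nat.exists_eq_add_of_le' hs
    obtain ⟨i⟩ := ‹Nonempty σ›
    rcases lt_or_ge s N with hsN | hNs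
    · exact eq_zero_of_commute_inversionLift (hA ▸ h i) hsN
    · exact hP _ (Nat.lt_succ_of_le hNs)
  refine ⟨fun i => ?_, ⟨hzero, fun h i => ?_⟩, fun h => hA₀ (hzero h)⟩
  · rw [hA, inversionLift_mul_sum_aeval_mul_divergence_pow_sub]
  · rw [hA₀ h]
    exact commute_aeval_of_commute (commute_inversionLift_fiberEuler i) (P 0)

end PhaseSpace

lemma endE_eq_fiberEuler (n : ℕ) : endE n = (fiberEuler ℂ (Fin n)).toLinearMap :=
  LinearMap.ext fun F => by simp [endE, fiberEuler_apply]

lemma endL_eq_inversionLift (n : ℕ) (i : Fin n) : endL n i = inversionLift ℂ i := by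
  refine LinearMap.ext fun F => ?_
  have hcoeff (j : Fin n) :
      ∑ k, X (Sum.inr k) * rename Sum.inl (pderiv j (X i * X k : MvPolynomial (Fin n) ℂ)) =
        (if i = j then ∑ k, X (Sum.inr k) * X (Sum.inl k) else 0) +
          (X (Sum.inl i) * X (Sum.inr j) : MvPolynomial (Fin n ⊕ Fin n) ℂ) := by
    simp only [pderiv_X_mul_X, map_add, map_smul, rename_X, mul_add, Finset.sum_add_distrib]
    by_cases h : i = j <;> simp [h, mul_comm]
  rw [inversionLift, Derivation.coeFn_coe, canonicalLift_apply]
  simp only [hcoeff]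
  simp [endL, add_mul, Finset.sum_add_distrib, mul_assoc, sub_sub]

/-- For `A = Σ_s P_s(ℰ) D^s` one has
`[L_{X_i}, A] = Σ_{s≥1} s P_s(ℰ)(2ℰ + n + s) D^{s−1} ∘ ∂/∂ξᵢ`;
this vanishes for all `i` iff `P_s = 0` for all `s ≥ 1`, and consequently
any such `A` commuting with all inversions equals `P₀(ℰ)`. -/
theorem affine_invariant_op_commuting_with_inversions (n : ℕ) (hn : 0 < n)
    (P : ℕ → Polynomial ℂ) (N : ℕ) (hP : ∀ s, N < s → P s = 0)
    (A : Module.End ℂ (MvPolynomial (Fin n ⊕ Fin n) ℂ))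
    (hA : A = ∑ s ∈ Finset.range (N + 1), Polynomial.aeval (endE n) (P s) * (endD n) ^ s) :
    (∀ i : Fin n, endL n i * A - A * endL n i =
        ∑ s ∈ Finset.range (N + 1), (s : ℂ) •
          (Polynomial.aeval (endE n) (P s) *
            (2 • endE n + ((n : ℂ) + (s : ℂ)) •
              (1 : Module.End ℂ (MvPolynomial (Fin n ⊕ Fin n) ℂ))) *
            (endD n) ^ (s - 1) * endXi n i)) ∧
    ((∀ i : Fin n, endL n i * A = A * endL n i) ↔ ∀ s, 1 ≤ s → P s = 0) ∧
    ((∀ i : Fin n, endL n i * A = A * endL n i) →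
      A = Polynomial.aeval (endE n) (P 0)) := by
  have : Nonempty (Fin n) := Fin.pos_iff_nonempty.1 hn
  have hD : endD n = divergence ℂ (Fin n) := rfl
  have hξ (i : Fin n) : endXi n i = (pderiv (Sum.inr i)).toLinearMap := rfl
  simp only [endE_eq_fiberEuler, endL_eq_inversionLift, hD, hξ] at hA ⊢
  simpa only [Fintype.card_fin] using
    affine_invariant_op_commuting_with_inversions_general P N hP A hA
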